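/- Programs are finite binary words, and $|p|$ is the length of $p \in \{0,1\}^*$. For a partial function $V : \{0,1\}^* \rightharpoonup X$ put $K_V(a) = \min\{|p| : V(p) = a\}$ (with $\min\emptyset = \infty$). For functions $f, g$ on $\mathbb{N}$, $f \le_{\rm ct} g$ means that there is a constant $c \in \mathbb{N}$ with $f(n) \le g(n) + c$ for all $n$, and $f =_{\rm ct} g$ means $f \le_{\rm ct} g$ and $g \le_{\rm ct} f$. A map $G : p \mapsto (G_1(p), G_2(p))$ from $\{0,1\}^*$ to pairs of partial recursive functions $\mathbb{N} \rightharpoonup \mathbb{N}$ is called partial-recursively given if $(p,x) \mapsto G_1(p)(x)$ and $(p,x) \mapsto G_2(p)(x)$ are partial recursive. Let $U = (U_1, U_2)$ be a strongly universal enumeration of pairs of partial recursive functions: $U$ is partial-recursively given, and there is a total recursive function $\mathrm{comp} : \{0,1\}^* \times \{0,1\}^* \to \{0,1\}^*$ such that the maps $p \mapsto U(\mathrm{comp}(e,p))$, $e \in \{0,1\}^*$, are exactly all the partial-recursively given maps, and such that for each $e$ there is a constant $c(e)$ with $|\mathrm{comp}(e,p)| \le |p| + c(e)$ for all $p$. The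 $\mathbb{Z}$-cardinal Kolmogorov complexity is $$K^{\mathbb{Z}}_{card}(m) = \min\{|p| : \mathrm{dom}\,U_1(p) \text{ and } \mathrm{dom}\,U_2(p) \text{ are finite and } \mathrm{card}(\mathrm{dom}\,U_1(p)) - \mathrm{card}(\mathrm{dom}\,U_2(p)) = m\}, \quad m \in \mathbb{Z}.$$ Let $\emptyset' = \{e : \varphi_e(e) \text{ converges}\}$ be the halting problem, and let $K' = K_{U'}$, where $U' : \{0,1\}^* \rightharpoonup \mathbb{N}$ is partial recursive in $\emptyset'$ and optimal, i.e. $K_{U'} \le_{\rm ct} K_W$ for every $W : \{0,1\}^* \rightharpoonup \mathbb{N}$ partial recursive in $\emptyset'$. Then $K^{\mathbb{Z}}_{card}$ and $K'$ take finite values on $\mathbb{N}$, and the restriction of $K^{\mathbb{Z}}_{card}$ to $\mathbb{N}$ coincides with $K'$ up to an additive constant: $K^{\mathbb{Z}}_{card}\!\upharpoonright\!\mathbb{N} =_{\rm ct} K'$. -/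

import Mathlib

/-- Programs: finite binary words. -/
abbrev Word : Type := List Bool

/-- `f ≤ct g` : there is a constant `c ∈ ℕ` with `f(n) ≤ g(n) + c` for all `n`. -/
def LeCt (f g : ℕ → ℕ∞) : Prop := ∃ c : ℕ, ∀ n : ℕ, f n ≤ g n + (c : ℕ∞)

/-- `f =ct g`, i.e. `f ≤ct g` and `g ≤ct f`; for finite-valued `f`, `g` this says that
`|f(n) − g(n)|` is bounded. -/
def EqCt (f g : ℕ → ℕ∞) : Prop := LeCt f g ∧ LeCt g f

/-- `K_V(a) = min {|p| : V(p) = a}`, with the convention `min ∅ = ∞`. -/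
noncomputable def KOf {α : Type} (V : Word →. α) (a : α) : ℕ∞ :=
  ⨅ p ∈ {p : Word | a ∈ V p}, (p.length : ℕ∞)

/-- The set `PR(ℕ → ℕ)` of partial recursive functions `ℕ ⇀ ℕ`. -/
abbrev PRFun : Type := {f : ℕ →. ℕ // Nat.Partrec f}

/-- A map `p ↦ (G₁(p), G₂(p))` from programs to pairs of partial recursive functions is
partial-recursively given if `(p, x) ↦ G₁(p)(x)` and `(p, x) ↦ G₂(p)(x)` are partial recursive. -/
def PRGivenPair (G : Word → PRFun × PRFun) : Prop :=
  Partrec₂ (fun (p : Word) (x : ℕ) => (G p).1.val x) ∧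
    Partrec₂ (fun (p : Word) (x : ℕ) => (G p).2.val x)

/-- `U` is a strongly universal enumeration of pairs of partial recursive functions: `U` is
partial-recursively given, and there is a total recursive `comp` such that the maps
`U_e : p ↦ U(comp(e, p))` are exactly all the partial-recursively given ones, and
`|comp(e, p)| ≤ |p| + c(e)`. -/
def StronglyUniversalPair (U : Word → PRFun × PRFun) : Prop :=
  PRGivenPair U ∧
    ∃ comp : Word → Word → Word, Computable₂ comp ∧
      Set.range (fun (e p : Word) => U (comp e p)) = {G | PRGivenPair G} ∧
      ∀ e : Word, ∃ c : ℕ, ∀ p : Word, (comp e p).length ≤ p.length + c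

/-- The effective ℤ-cardinal representation: `card^ℤ(f, g)` is defined iff `f` and `g` have
finite domains, and then equals `card(dom f) − card(dom g)`. -/
noncomputable def cardZ : PRFun × PRFun →. ℤ := fun fg =>
  ⟨fg.1.val.Dom.Finite ∧ fg.2.val.Dom.Finite,
    fun _ => (fg.1.val.Dom.ncard : ℤ) - (fg.2.val.Dom.ncard : ℤ)⟩

/-- The ℤ-cardinal Kolmogorov complexity
`K^ℤ_card(m) = min {|p| : card^ℤ(U₁(p), U₂(p)) = m}`. -/
noncomputable def KcardZ (U : Word → PRFun × PRFun) : ℤ → ℕ∞ :=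
  KOf (fun p : Word => cardZ (U p))

/-- `φ_e`, the partial recursive function `ℕ ⇀ ℕ` with Gödel number `e`. -/
def phi (e : ℕ) : ℕ →. ℕ := (Denumerable.ofNat Nat.Partrec.Code e).eval

/-- `∅'`, the halting problem `{e : φ_e(e) converges}`. -/
def halting : Set ℕ := {e : ℕ | (phi e e).Dom}

open Classical in
/-- The characteristic function of a set of integers, as an oracle. -/
noncomputable def chi (A : Set ℕ) : ℕ →. ℕ :=
  fun n => Part.some (if n ∈ A then 1 else 0)

/-- `V : {0,1}* ⇀ ℕ` is optimal among the functions partial recursive in `A`. -/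
def OptimalIn (A : Set ℕ) (V : Word →. ℕ) : Prop :=
  RecursiveIn {chi A} V ∧ ∀ W : Word →. ℕ, RecursiveIn {chi A} W → LeCt (KOf V) (KOf W)

/-!
The bridge between the two complexities is Shoenfield's limit lemma for partial functions: up to
extension, the functions partial recursive in `∅'` are the pointwise limits of primitive recursive
functions `g(p, s)` as `s → ∞`. On the one hand, counting the arguments on which a program has been
seen to halt by stage `s` exhibits the cardinal of a finite domain as such a limit, so
`card(dom f) − card(dom g)` is computable from `∅'`. On the other hand, if `g(p, 0) = 0` and
`g(p, s) → n`, then `n` is the total increase minus the total decrease of `g(p, ·)`, and these are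
the cardinals of the domains of two functions partial recursive uniformly in `p`.
-/

open Filter Encodable
open Nat.Partrec (Code)
open Nat.Partrec.Code (evaln)

/-! ### Kolmogorov complexities -/

theorem LeCt.ne_top {f g : ℕ → ℕ∞} (hfg : LeCt f g) (hg : ∀ n, g n ≠ ⊤) (n : ℕ) : f n ≠ ⊤ := by
  obtain ⟨c, hc⟩ := hfg
  exact ne_top_of_le_ne_top (WithTop.add_ne_top.2 ⟨hg n, ENat.natCast_ne_top c⟩) (hc n)

section KOf

variable {α β : Type} {V : Word →. α} {W : Word →. β} {a : α} {b : β}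

theorem KOf_le_length {p : Word} (h : a ∈ V p) : KOf V a ≤ p.length :=
  iInf₂_le p h

theorem KOf_le_KOf (h : ∀ p, a ∈ V p → b ∈ W p) : KOf W b ≤ KOf V a :=
  biInf_mono h

theorem KOf_le_KOf_comp_add {c : ℕ} {t : Word → Word} (ht : ∀ p, (t p).length ≤ p.length + c) :
    KOf V a ≤ KOf (fun p => V (t p)) a + c := by
  refine tsub_le_iff_right.1 (le_iInf₂ fun p hp => tsub_le_iff_right.2 ?_)
  exact (KOf_le_length hp).trans (mod_cast ht p)

end KOf

theorem OptimalIn.KOf_ne_top {A : Set ℕ} {V : Word →. ℕ} (hV : OptimalIn A V) :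
    ∀ n, KOf V n ≠ ⊤ := by
  have hlength : RecursiveIn {chi A} fun p : Word => Part.some p.length :=
    Computable.list_length.partrec.recursiveIn
  refine (hV.2 _ hlength).ne_top fun n => ?_
  have hle : KOf (fun p : Word => Part.some p.length) n ≤ (List.replicate n true).length :=
    KOf_le_length (by simp)
  exact ne_top_of_le_ne_top (ENat.natCast_ne_top _) hle

theorem StronglyUniversalPair.exists_KcardZ_le_KcardZ_add {U G : Word → PRFun × PRFun}
    (hU : StronglyUniversalPair U) (hG : PRGivenPair G) :
    ∃ c : ℕ, ∀ m, KcardZ U m ≤ KcardZ G m + c := by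
  obtain ⟨-, comp, -, hrange, hlen⟩ := hU
  obtain ⟨e, rfl⟩ : G ∈ Set.range fun (e p : Word) => U (comp e p) := hrange ▸ hG
  obtain ⟨c, hc⟩ := hlen e
  exact ⟨c, fun m => KOf_le_KOf_comp_add hc⟩

/-! ### Stagewise evaluation of programs -/

theorem eventually_isSome_evaln {c : Code} {n : ℕ} (h : (c.eval n).Dom) :
    ∀ᶠ k in atTop, (evaln k c n).isSome := by
  obtain ⟨y, hy⟩ := Part.dom_iff_mem.1 h
  obtain ⟨m, hm⟩ := Nat.Partrec.Code.evaln_complete.1 hy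
  filter_upwards [eventually_ge_atTop m] with k hk
  exact Option.isSome_of_mem (Nat.Partrec.Code.evaln_mono hk hm)

theorem dom_eval_of_isSome_evaln {k : ℕ} {c : Code} {n : ℕ} (h : (evaln k c n).isSome) :
    (c.eval n).Dom := by
  obtain ⟨y, hy⟩ := Option.isSome_iff_exists.1 h
  exact Part.dom_iff_mem.2 ⟨y, Nat.Partrec.Code.evaln_sound hy⟩

theorem eventually_count_eq_ncard {P : ℕ → ℕ → Prop} [∀ k, DecidablePred (P k)] {S : Set ℕ}
    (hS : S.Finite) (sound : ∀ k y, P k y → y ∈ S) (complete : ∀ y ∈ S, ∀ᶠ k in atTop, P k y) :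
    ∀ᶠ k in atTop, Nat.count (P k) k = S.ncard := by
  have hall : ∀ᶠ k in atTop, ∀ y ∈ S, y < k ∧ P k y :=
    (eventually_all_finite hS).2 fun y hy => (eventually_gt_atTop y).and (complete y hy)
  filter_upwards [hall] with k hk
  have hfilter : (((Finset.range k).filter (P k) : Finset ℕ) : Set ℕ) = S := by
    ext y
    simpa using ⟨fun h => sound k y h.2, hk y⟩
  rw [Nat.count_eq_card_filter_range, ← hfilter, Set.ncard_coe_finset]

/-! ### Limits computed from the halting problem -/

section EventualValue

variable {α σ τ υ : Type*} [Primcodable α] [Primcodable σ]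

/-- The limit of a sequence in the discrete topology, as a partial value: it is defined if the
sequence is eventually constant. -/
noncomputable def eventualValue (u : ℕ → τ) : Part τ :=
  ⟨∃ y, ∀ᶠ s in atTop, u s = y, Exists.choose⟩

theorem mem_eventualValue {u : ℕ → τ} {y : τ} :
    y ∈ eventualValue u ↔ ∀ᶠ s in atTop, u s = y := by
  refine ⟨fun ⟨h, hy⟩ => hy ▸ h.choose_spec, fun hy => ?_⟩
  have h : ∃ y, ∀ᶠ s in atTop, u s = y := ⟨y, hy⟩
  obtain ⟨s, hs, hs'⟩ := (h.choose_spec.and hy).exists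
  exact ⟨h, hs.symm.trans hs'⟩

theorem eventualValue_comp {f : τ → υ} (hf : f.Injective) (u : ℕ → τ) :
    eventualValue (f ∘ u) = (eventualValue u).map f := by
  ext z
  simp only [Part.mem_map_iff, mem_eventualValue, Function.comp_apply]
  refine ⟨fun hz => ?_, fun ⟨y, hy, hz⟩ => hz ▸ hy.mono fun s hs => congrArg f hs⟩
  obtain ⟨s, rfl⟩ := hz.exists
  exact ⟨u s, hz.mono fun t ht => hf ht, rfl⟩

open Classical in
theorem eventualValue_eq_map_rfind (u : ℕ → τ) :
    eventualValue u =
      (Nat.rfind fun k => Part.some (decide (∀ j, u (k + j) = u k))).map u := by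
  ext y
  simp only [mem_eventualValue, Part.mem_map_iff]
  constructor
  · intro hy
    obtain ⟨N, hN⟩ := eventually_atTop.1 hy
    have hconst : ∀ j, u (N + j) = u N := fun j =>
      (hN _ (Nat.le_add_right N j)).trans (hN N le_rfl).symm
    obtain ⟨k, hk⟩ := Part.dom_iff_mem.1
      (Nat.rfind_dom (p := fun k => Part.some (decide (∀ j, u (k + j) = u k))).2
        ⟨N, by simpa using hconst, fun _ => trivial⟩)
    have hk' : ∀ j, u (k + j) = u k := by simpa using Nat.rfind_spec hk
    exact ⟨k, hk, (hk' N).symm.trans (hN _ (Nat.le_add_left N k))⟩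
  · rintro ⟨k, hk, rfl⟩
    have hk' : ∀ j, u (k + j) = u k := by simpa using Nat.rfind_spec hk
    filter_upwards [eventually_ge_atTop k] with s hs
    rw [← hk' (s - k), Nat.add_sub_cancel' hs]

theorem manyOneReducible_halting {P : α → Prop} (hP : REPred P) : P ≤₀ (· ∈ halting) := by
  obtain ⟨c, hc⟩ := Nat.Partrec.Code.exists_code.1 hP
  refine ⟨fun a => encode (c.comp (Code.const (encode a))), ?_, fun a => ?_⟩
  · exact (Primrec.encode.comp (Nat.Partrec.Code.primrec₂_comp.comp (Primrec.const c)
      (Nat.Partrec.Code.primrec_const.comp Primrec.encode))).to_comp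
  · simp [halting, phi, Nat.Partrec.Code.eval, hc, Part.assert]

theorem recursiveIn_chi_of_manyOneReducible {A B : Set ℕ} (h : (· ∈ A) ≤₀ (· ∈ B)) :
    Nat.RecursiveIn {chi B} (chi A) := by
  obtain ⟨r, hr, hAB⟩ := h
  have hchi : Nat.RecursiveIn {chi B} (chi B) := .oracle _ (Set.mem_singleton _)
  refine (hchi.comp (Partrec.nat_iff.1 hr.partrec).recursiveIn).of_eq fun n => ?_
  have hn : n ∈ A ↔ r n ∈ B := hAB n
  refine (Part.bind_some _ _).trans ?_
  classical exact congrArg Part.some (if_congr hn.symm rfl rfl)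

theorem rePred_exists_ne {g : ℕ → ℕ → ℕ} (hg : Computable₂ g) :
    REPred fun z : ℕ => ∃ j, g z.unpair.1 (z.unpair.2 + j) ≠ g z.unpair.1 z.unpair.2 := by
  have hx : Computable fun q : ℕ × ℕ => q.1.unpair.1 :=
    Computable.fst.comp (Computable.unpair.comp Computable.fst)
  have hk : Computable fun q : ℕ × ℕ => q.1.unpair.2 :=
    Computable.snd.comp (Computable.unpair.comp Computable.fst)
  have hne : Computable₂ fun z j : ℕ =>
      !(g z.unpair.1 (z.unpair.2 + j) == g z.unpair.1 z.unpair.2) :=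
    Primrec.not.to_comp.comp (Primrec.beq.to_comp.comp
      (hg.comp hx (Primrec.nat_add.to_comp.comp hk Computable.snd)) (hg.comp hx hk))
  refine (Partrec.rfind hne.partrec₂).dom_re.of_eq fun z => ?_
  rw [Nat.rfind_dom']
  simp

theorem natRecursiveIn_eventualValue {g : ℕ → ℕ → ℕ} (hg : Computable₂ g) :
    Nat.RecursiveIn {chi halting} fun x => eventualValue (g x) := by
  classical
  have hunstable : Nat.RecursiveIn {chi halting}
      (chi {z | ∃ j, g z.unpair.1 (z.unpair.2 + j) ≠ g z.unpair.1 z.unpair.2}) :=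
    recursiveIn_chi_of_manyOneReducible (manyOneReducible_halting (rePred_exists_ne hg))
  have hstage : Nat.RecursiveIn {chi halting} fun x =>
      Nat.rfind fun k => Part.some (decide (∀ j, g x (k + j) = g x k)) := by
    refine hunstable.rfind.of_eq fun x => ?_
    congr 1
    funext k
    simp [chi]
  have hval : Nat.Partrec fun z => Part.some (g z.unpair.1 z.unpair.2) :=
    Partrec.nat_iff.1 (hg.comp (Computable.fst.comp Computable.unpair)
      (Computable.snd.comp Computable.unpair)).partrec
  refine (hval.recursiveIn.comp (.pair (Nat.Primrec.recursiveIn Nat.Primrec.id) hstage)).of_eq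
    fun x => ?_
  rw [eventualValue_eq_map_rfind]
  ext y
  simp [Seq.seq, eq_comm]

theorem recursiveIn_of_encode {O : Set (ℕ →. ℕ)} {f : α →. σ} {F : ℕ →. ℕ}
    (hF : Nat.RecursiveIn O F) (h : ∀ a, F (encode a) = (f a).map encode) : RecursiveIn O f := by
  have hid : Nat.RecursiveIn O fun n =>
      (decode (α := α) n : Part α).bind fun a => (Part.some a).map encode :=
    (Partrec.some (α := α)).recursiveIn
  refine (hF.comp hid).of_eq fun n => (Part.bind_assoc _ _ _).trans ?_
  congr 1
  funext a
  exact (Part.bind_some _ _).trans (h a)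

theorem recursiveIn_eventualValue {g : α → ℕ → σ} (hg : Computable₂ g) :
    RecursiveIn {chi halting} fun a => eventualValue (g a) := by
  have hcode : Computable₂ fun n s => encode ((decode (α := α) n).map (g · s)) :=
    Computable.encode.comp (Computable.option_map (Computable.decode.comp Computable.fst)
      (hg.comp Computable.snd (Computable.snd.comp Computable.fst)))
  refine recursiveIn_of_encode (Nat.RecursiveIn.comp
    (Nat.Primrec.recursiveIn Nat.Primrec.pred) (natRecursiveIn_eventualValue hcode)) fun a => ?_
  have hcomp : (fun s => encode ((decode (α := α) (encode a)).map (g · s))) =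
      (fun y => encode (some y)) ∘ g a := by
    funext s
    simp
  have hinj : Function.Injective fun y : σ => encode (some y) :=
    encode_injective.comp (Option.some_injective σ)
  simp only [hcomp, eventualValue_comp hinj]
  ext y
  simp [eq_comm]

end EventualValue

/-- Every value of `f` is the limit of a primitive recursive approximation. Nothing is asked outside
the domain of `f`: the approximations of a composition may converge where it is undefined. -/
def LimitApproximable {α σ : Type*} [Primcodable α] [Primcodable σ] (f : α →. σ) : Prop :=
  ∃ g : α → ℕ → σ, Primrec₂ g ∧ ∀ a, ∀ y ∈ f a, ∀ᶠ s in atTop, g a s = y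

namespace LimitApproximable

section Closure

variable {α β γ σ : Type*} [Primcodable α] [Primcodable β] [Primcodable γ] [Primcodable σ]

theorem of_primrec {f : α → σ} (hf : Primrec f) : LimitApproximable (f : α →. σ) :=
  ⟨fun a _ => f a, hf.comp Primrec.fst, fun _ _ hy =>
    Eventually.of_forall fun _ => (Part.mem_some_iff.1 hy).symm⟩

theorem bind {f : β →. σ} {h : α →. β} (hf : LimitApproximable f) (hh : LimitApproximable h) :
    LimitApproximable fun a => (h a).bind f := by
  obtain ⟨F, hF, limF⟩ := hf
  obtain ⟨H, hH, limH⟩ := hh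
  refine ⟨fun a s => F (H a s) s, hF.comp hH Primrec.snd, fun a z hz => ?_⟩
  obtain ⟨y, hy, hz⟩ := Part.mem_bind_iff.1 hz
  filter_upwards [limH a y hy, limF y z hz] with s hHs hFs
  rw [hHs, hFs]

theorem map₂ {op : β → γ → σ} (hop : Primrec₂ op) {f : α →. β} {h : α →. γ}
    (hf : LimitApproximable f) (hh : LimitApproximable h) :
    LimitApproximable fun a => (f a).bind fun y => (h a).map (op y) := by
  obtain ⟨F, hF, limF⟩ := hf
  obtain ⟨H, hH, limH⟩ := hh
  refine ⟨fun a s => op (F a s) (H a s), hop.comp hF hH, fun a w hw => ?_⟩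
  obtain ⟨y, hy, hw⟩ := Part.mem_bind_iff.1 hw
  obtain ⟨z, hz, rfl⟩ := (Part.mem_map_iff _).1 hw
  filter_upwards [limF a y hy, limH a z hz] with s hFs hHs
  rw [hFs, hHs]

end Closure

section NatFunctions

variable {f h : ℕ →. ℕ}

theorem pair (hf : LimitApproximable f) (hh : LimitApproximable h) :
    LimitApproximable fun n => Nat.pair <$> f n <*> h n := by
  simpa [Seq.seq, Part.bind_map] using map₂ Primrec₂.natPair hf hh

theorem prec (hf : LimitApproximable f) (hh : LimitApproximable h) :
    LimitApproximable fun p =>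
      let (a, n) := Nat.unpair p
      Nat.rec (motive := fun _ => Part ℕ) (f a)
        (fun y IH => IH >>= fun i => h (Nat.pair a (Nat.pair y i))) n := by
  obtain ⟨F, hF, limF⟩ := hf
  obtain ⟨H, hH, limH⟩ := hh
  let G (a n s : ℕ) : ℕ := Nat.rec (F a s) (fun y i => H (Nat.pair a (Nat.pair y i)) s) n
  have hG : Primrec₂ fun x s : ℕ => G x.unpair.1 x.unpair.2 s := by
    have ha : Primrec fun q : ℕ × ℕ => q.1.unpair.1 :=
      Primrec.fst.comp (Primrec.unpair.comp Primrec.fst)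
    have hn : Primrec fun q : ℕ × ℕ => q.1.unpair.2 :=
      Primrec.snd.comp (Primrec.unpair.comp Primrec.fst)
    have hstep : Primrec₂ fun (q r : ℕ × ℕ) =>
        H (Nat.pair q.1.unpair.1 (Nat.pair r.1 r.2)) q.2 :=
      hH.comp (Primrec₂.natPair.comp (ha.comp Primrec.fst)
        (Primrec₂.natPair.comp (Primrec.fst.comp Primrec.snd) (Primrec.snd.comp Primrec.snd)))
        (Primrec.snd.comp Primrec.fst)
    exact Primrec.nat_rec' hn (hF.comp ha Primrec.snd) hstep
  refine ⟨_, hG, fun x => ?_⟩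
  dsimp only
  generalize x.unpair.1 = a
  induction x.unpair.2 with
  | zero => exact limF a
  | succ n ih =>
    intro y hy
    obtain ⟨i, hi, hy⟩ := Part.mem_bind_iff.1 hy
    filter_upwards [ih i hi, limH _ y hy] with s hGs hHs
    rw [← hHs, ← hGs]

theorem rfind (hf : LimitApproximable f) :
    LimitApproximable fun a => Nat.rfind fun n => (fun m => m = 0) <$> f (Nat.pair a n) := by
  obtain ⟨F, hF, limF⟩ := hf
  refine ⟨fun a s => (List.range s).findIdx fun n => F (Nat.pair a n) s == 0, ?_, fun a n hn => ?_⟩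
  · have hpair : Primrec fun q : (ℕ × ℕ) × ℕ => Nat.pair q.1.1 q.2 :=
      Primrec₂.natPair.comp (Primrec.fst.comp Primrec.fst) Primrec.snd
    exact Primrec.list_findIdx (Primrec.list_range.comp Primrec.snd)
      (Primrec.beq.comp (hF.comp hpair (Primrec.snd.comp Primrec.fst)) (Primrec.const 0))
  obtain ⟨hzero, hpos⟩ := Nat.mem_rfind.1 hn
  simp only [Part.map_eq_map, Part.mem_map_iff, decide_eq_true_eq, decide_eq_false_iff_not,
    exists_eq_right] at hzero hpos
  have hbelow : ∀ᶠ s in atTop, ∀ m < n, F (Nat.pair a m) s ≠ 0 := by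
    refine (eventually_all_finite (Set.finite_Iio n)).2 fun m hm => ?_
    obtain ⟨k, hk, hk0⟩ := hpos hm
    exact (limF _ k hk).mono fun s hs => hs ▸ hk0
  filter_upwards [limF _ 0 hzero, hbelow, eventually_gt_atTop n] with s hs hbelow hns
  rw [List.findIdx_eq (by simpa using hns)]
  simpa using ⟨hs, hbelow⟩

theorem chi_halting : LimitApproximable (chi halting) := by
  refine ⟨fun x s => bif (evaln s (Denumerable.ofNat Code x) x).isSome then 1 else 0, ?_, ?_⟩
  · exact Primrec.cond (Primrec.option_isSome.comp (Nat.Partrec.Code.primrec_evaln.comp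
      ((Primrec.snd.pair ((Primrec.ofNat Code).comp Primrec.fst)).pair Primrec.fst)))
      (Primrec.const 1) (Primrec.const 0)
  intro x n hn
  obtain rfl := Part.mem_some_iff.1 hn
  by_cases hx : x ∈ halting
  · filter_upwards [eventually_isSome_evaln hx] with s hs
    simp [hs, hx]
  · have hnone (s : ℕ) : (evaln s (Denumerable.ofNat Code x) x).isSome = false :=
      Bool.eq_false_iff.2 fun hs => hx (dom_eval_of_isSome_evaln hs)
    exact Eventually.of_forall fun s => by simp [hnone s, hx]

theorem of_natRecursiveIn_halting (hf : Nat.RecursiveIn {chi halting} f) :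
    LimitApproximable f := by
  induction hf with
  | zero => exact of_primrec (Primrec.const 0)
  | succ => exact of_primrec Primrec.succ
  | left => exact of_primrec (Primrec.fst.comp Primrec.unpair)
  | right => exact of_primrec (Primrec.snd.comp Primrec.unpair)
  | oracle g hg => exact Set.mem_singleton_iff.1 hg ▸ chi_halting
  | pair _ _ ihf ihh => exact ihf.pair ihh
  | comp _ _ ihf ihh => exact ihf.bind ihh
  | prec _ _ ihf ihh => exact ihf.prec ihh
  | rfind _ ihf => exact ihf.rfind

end NatFunctions

end LimitApproximable

theorem limitApproximable_iff_exists_recursiveIn_halting {α σ : Type*} [Primcodable α]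
    [Primcodable σ] [Inhabited σ] {f : α →. σ} :
    LimitApproximable f ↔
      ∃ W : α →. σ, RecursiveIn {chi halting} W ∧ ∀ a, f a ≤ W a := by
  constructor
  · rintro ⟨g, hg, lim⟩
    exact ⟨_, recursiveIn_eventualValue hg.to_comp, fun a y hy => mem_eventualValue.2 (lim a y hy)⟩
  · rintro ⟨W, hW, hfW⟩
    obtain ⟨g, hg, lim⟩ := LimitApproximable.of_natRecursiveIn_halting hW
    refine ⟨fun a s => (decode (g (encode a) s)).getD default, ?_, fun a y hy => ?_⟩
    · exact Primrec.option_getD.comp (Primrec.decode.comp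
        (hg.comp (Primrec.encode.comp Primrec.fst) Primrec.snd)) (Primrec.const default)
    · have hy' : encode y ∈ (W a).map encode := Part.mem_map _ (hfW a y hy)
      filter_upwards [lim (encode a) (encode y) (by simpa using hy')] with s hs
      simp [hs]

/-! ### Cardinals of domains -/

/-- The cardinal of the domain of a partial function, defined if this domain is finite. -/
noncomputable def domCard {α σ : Type*} (f : α →. σ) : Part ℕ :=
  ⟨f.Dom.Finite, fun _ => f.Dom.ncard⟩

theorem mem_domCard {α σ : Type*} {f : α →. σ} {n : ℕ} :
    n ∈ domCard f ↔ f.Dom.Finite ∧ f.Dom.ncard = n :=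
  Part.mem_mk_iff.trans exists_prop

theorem mem_cardZ {F : PRFun × PRFun} {m : ℤ} :
    m ∈ cardZ F ↔ ∃ a ∈ domCard F.1.val, ∃ b ∈ domCard F.2.val, (a - b : ℤ) = m := by
  simp only [mem_domCard]
  constructor
  · rintro ⟨⟨h₁, h₂⟩, rfl⟩
    exact ⟨_, ⟨h₁, rfl⟩, _, ⟨h₂, rfl⟩, rfl⟩
  · rintro ⟨_, ⟨h₁, rfl⟩, _, ⟨h₂, rfl⟩, rfl⟩
    exact ⟨⟨h₁, h₂⟩, rfl⟩

/-- The number of `y < k` for which the program `c` is seen to halt on `(x, y)` at stage `k`. -/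
def haltCount (c : Code) (x k : ℕ) : ℕ :=
  Nat.count (fun y => (evaln k c (Nat.pair x y)).isSome) k

theorem primrec_haltCount (c : Code) : Primrec₂ (haltCount c) := by
  have hlist : Primrec₂ fun x k : ℕ =>
      ((List.range k).filterMap fun y => evaln k c (Nat.pair x y)).length := by
    refine Primrec.list_length.comp (Primrec.listFilterMap (Primrec.list_range.comp Primrec.snd) ?_)
    exact Nat.Partrec.Code.primrec_evaln.comp
      (((Primrec.snd.comp Primrec.fst).pair (Primrec.const c)).pair
        (Primrec₂.natPair.comp (Primrec.fst.comp Primrec.fst) Primrec.snd))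
  refine hlist.of_eq fun x k => ?_
  simp [haltCount, List.length_filterMap_eq_countP, Nat.count]

theorem eventually_haltCount_eq_ncard {c : Code} {x : ℕ}
    (hfin : {y | (c.eval (Nat.pair x y)).Dom}.Finite) :
    ∀ᶠ k in atTop, haltCount c x k = {y | (c.eval (Nat.pair x y)).Dom}.ncard :=
  eventually_count_eq_ncard hfin (fun _ _ => dom_eval_of_isSome_evaln)
    fun _ => eventually_isSome_evaln

theorem limitApproximable_domCard {α σ : Type*} [Primcodable α] [Primcodable σ]
    {F : α → ℕ →. σ} (hF : Partrec₂ F) : LimitApproximable fun a => domCard (F a) := by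
  obtain ⟨c, hc⟩ := Nat.Partrec.Code.exists_code.1 hF
  have hdom (a : α) : {y | (c.eval (Nat.pair (encode a) y)).Dom} = (F a).Dom := by
    ext y
    simp [hc, Part.dom_iff_mem, PFun.mem_dom]
  refine ⟨fun a => haltCount c (encode a),
    (primrec_haltCount c).comp (Primrec.encode.comp Primrec.fst) Primrec.snd, fun a n hn => ?_⟩
  obtain ⟨hfin, rfl⟩ := mem_domCard.1 hn
  rw [← hdom a] at hfin ⊢
  exact eventually_haltCount_eq_ncard hfin

theorem PRGivenPair.exists_recursiveIn_halting_of_mem_cardZ {G : Word → PRFun × PRFun}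
    (hG : PRGivenPair G) :
    ∃ W : Word →. ℕ, RecursiveIn {chi halting} W ∧
      ∀ p, ∀ n : ℕ, (n : ℤ) ∈ cardZ (G p) → n ∈ W p := by
  obtain ⟨W, hW, hle⟩ := limitApproximable_iff_exists_recursiveIn_halting.1
    ((limitApproximable_domCard hG.1).map₂ Primrec.nat_sub (limitApproximable_domCard hG.2))
  refine ⟨W, hW, fun p n hn => hle p n ?_⟩
  obtain ⟨a, ha, b, hb, hab⟩ := mem_cardZ.1 hn
  -- `domCard` values are subtracted in `ℕ`, which differs from `cardZ` only for negative values
  exact Part.mem_bind ha ((Part.mem_map_iff _).2 ⟨b, hb, by omega⟩)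

/-! ### Limits as differences of cardinals -/

/-- The constant function `0` restricted to the set of pairs `⟨s, i⟩` with `i < d s`, whose
cardinal is the sum of `d`. -/
def hypograph (d : ℕ → ℕ) : ℕ →. ℕ := fun z =>
  Part.assert (z.unpair.2 < d z.unpair.1) fun _ => Part.some 0

theorem partrec₂_hypograph {α : Type*} [Primcodable α] {d : α → ℕ → ℕ} (hd : Computable₂ d) :
    Partrec₂ fun a => hypograph (d a) := by
  have hlt : Computable fun q : α × ℕ => decide (q.2.unpair.2 < d q.1 q.2.unpair.1) :=
    Primrec.nat_lt.decide.to_comp.comp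
      (Computable.snd.comp (Computable.unpair.comp Computable.snd))
      (hd.comp Computable.fst (Computable.fst.comp (Computable.unpair.comp Computable.snd)))
  have hre : REPred fun q : α × ℕ => q.2.unpair.2 < d q.1 q.2.unpair.1 :=
    ComputablePred.to_re ⟨inferInstance, hlt⟩
  refine (Partrec.map hre (Computable.const 0).to₂).of_eq fun q => ?_
  ext y
  simp [hypograph, eq_comm]

theorem dom_hypograph (d : ℕ → ℕ) : (hypograph d).Dom = {z | z.unpair.2 < d z.unpair.1} := by
  ext z
  simp [hypograph, PFun.mem_dom]

theorem sum_mem_domCard_hypograph {d : ℕ → ℕ} {T : Finset ℕ} (hd : ∀ s ∉ T, d s = 0) :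
    ∑ s ∈ T, d s ∈ domCard (hypograph d) := by
  let pairs := T.sigma fun s => Finset.range (d s)
  have hinj : Function.Injective fun q : (_ : ℕ) × ℕ => Nat.pair q.1 q.2 := by
    rintro ⟨s, i⟩ ⟨s', i'⟩ hq
    obtain ⟨rfl, rfl⟩ := Nat.pair_eq_pair.1 hq
    rfl
  have hdom : (hypograph d).Dom = (fun q => Nat.pair q.1 q.2) '' (pairs : Set ((_ : ℕ) × ℕ)) := by
    rw [dom_hypograph]
    ext z
    constructor
    · refine fun hz => ⟨⟨z.unpair.1, z.unpair.2⟩, ?_, Nat.pair_unpair z⟩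
      have hT : z.unpair.1 ∈ T := by
        by_contra hT
        exact absurd (hd _ hT) (Nat.ne_zero_of_lt hz)
      exact Finset.mem_sigma.2 ⟨hT, Finset.mem_range.2 hz⟩
    · rintro ⟨q, hq, rfl⟩
      simpa using Finset.mem_range.1 (Finset.mem_sigma.1 hq).2
  rw [mem_domCard, hdom, Set.ncard_image_of_injective _ hinj, Set.ncard_coe_finset]
  exact ⟨pairs.finite_toSet.image _, by simp [pairs]⟩

theorem exists_mem_domCard_hypograph_sub_eq {g : ℕ → ℕ} {n : ℕ} (hg : ∀ᶠ s in atTop, g s = n) :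
    ∃ a ∈ domCard (hypograph fun s => g (s + 1) - g s),
      ∃ b ∈ domCard (hypograph fun s => g s - g (s + 1)), (a - b : ℤ) = n - g 0 := by
  obtain ⟨N, hN⟩ := eventually_atTop.1 hg
  have hconst : ∀ s ∉ Finset.range N, g (s + 1) = g s := fun s hs => by
    have hNs : N ≤ s := by simpa using hs
    rw [hN s hNs, hN (s + 1) (hNs.trans s.le_succ)]
  refine ⟨_, sum_mem_domCard_hypograph (T := Finset.range N) fun s hs => by simp [hconst s hs],
    _, sum_mem_domCard_hypograph (T := Finset.range N) fun s hs => by simp [hconst s hs], ?_⟩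
  calc ((∑ s ∈ Finset.range N, (g (s + 1) - g s) : ℕ) : ℤ) -
        (∑ s ∈ Finset.range N, (g s - g (s + 1)) : ℕ)
      = ∑ s ∈ Finset.range N, ((g (s + 1) : ℤ) - g s) := by
        push_cast
        rw [← Finset.sum_sub_distrib]
        exact Finset.sum_congr rfl fun s _ => by omega
    _ = g N - g 0 := Finset.sum_range_sub (fun s => (g s : ℤ)) N
    _ = n - g 0 := by rw [hN N le_rfl]

theorem exists_PRGivenPair_of_partrec₂ {F₁ F₂ : Word → ℕ →. ℕ} (h₁ : Partrec₂ F₁)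
    (h₂ : Partrec₂ F₂) :
    ∃ G : Word → PRFun × PRFun, PRGivenPair G ∧ ∀ p, (G p).1.val = F₁ p ∧ (G p).2.val = F₂ p :=
  ⟨fun p => (⟨F₁ p, Partrec.nat_iff.1 (h₁.comp (Computable.const p) Computable.id)⟩,
    ⟨F₂ p, Partrec.nat_iff.1 (h₂.comp (Computable.const p) Computable.id)⟩),
    ⟨h₁, h₂⟩, fun _ => ⟨rfl, rfl⟩⟩

theorem LimitApproximable.exists_approximation_zero {α : Type*} [Primcodable α] {f : α →. ℕ}
    (hf : LimitApproximable f) :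
    ∃ g : α → ℕ → ℕ, Primrec₂ g ∧ (∀ a, g a 0 = 0) ∧
      ∀ a, ∀ n ∈ f a, ∀ᶠ s in atTop, g a s = n := by
  obtain ⟨g, hg, lim⟩ := hf
  refine ⟨fun a s => if s = 0 then 0 else g a s, ?_, fun a => if_pos rfl, fun a n hn => ?_⟩
  · exact Primrec.ite (Primrec.eq.comp Primrec.snd (Primrec.const 0)) (Primrec.const 0) hg
  · filter_upwards [lim a n hn, eventually_ne_atTop 0] with s hs hs0
    rw [if_neg hs0, hs]

theorem LimitApproximable.exists_PRGivenPair_mem_cardZ {V : Word →. ℕ}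
    (hV : LimitApproximable V) :
    ∃ G : Word → PRFun × PRFun, PRGivenPair G ∧ ∀ p, ∀ n ∈ V p, (n : ℤ) ∈ cardZ (G p) := by
  obtain ⟨g, hg, hzero, lim⟩ := hV.exists_approximation_zero
  have hg : Computable₂ g := hg.to_comp
  have hsucc : Computable₂ fun p s => g p (s + 1) :=
    hg.comp Computable.fst (Computable.succ.comp Computable.snd)
  have hincrease : Computable₂ fun p s => g p (s + 1) - g p s :=
    Primrec.nat_sub.to_comp.comp hsucc hg
  have hdecrease : Computable₂ fun p s => g p s - g p (s + 1) :=
    Primrec.nat_sub.to_comp.comp hg hsucc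
  obtain ⟨G, hG, hGval⟩ := exists_PRGivenPair_of_partrec₂
    (partrec₂_hypograph hincrease) (partrec₂_hypograph hdecrease)
  refine ⟨G, hG, fun p n hn => ?_⟩
  rw [mem_cardZ, (hGval p).1, (hGval p).2]
  simpa [hzero] using exists_mem_domCard_hypograph_sub_eq (lim p n hn)

/-- `K^ℤ_card` restricted to `ℕ` and `K'` are finite-valued and equal up to an additive constant. -/
theorem stmt14 (U : Word → PRFun × PRFun) (hU : StronglyUniversalPair U)
    (U' : Word →. ℕ) (hU' : OptimalIn halting U') :
    (∀ n : ℕ, KcardZ U (n : ℤ) ≠ ⊤) ∧ (∀ n : ℕ, KOf U' n ≠ ⊤) ∧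
      EqCt (fun n : ℕ => KcardZ U (n : ℤ)) (KOf U') := by
  have hle : LeCt (fun n : ℕ => KcardZ U (n : ℤ)) (KOf U') := by
    have happrox : LimitApproximable U' :=
      limitApproximable_iff_exists_recursiveIn_halting.2 ⟨U', hU'.1, fun _ => le_rfl⟩
    obtain ⟨G, hG, hcard⟩ := happrox.exists_PRGivenPair_mem_cardZ
    obtain ⟨c, hc⟩ := hU.exists_KcardZ_le_KcardZ_add hG
    exact ⟨c, fun n => (hc n).trans (by gcongr; exact KOf_le_KOf fun p => hcard p n)⟩
  have hge : LeCt (KOf U') fun n : ℕ => KcardZ U (n : ℤ) := by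
    obtain ⟨W, hW, hcard⟩ := PRGivenPair.exists_recursiveIn_halting_of_mem_cardZ hU.1
    obtain ⟨c, hc⟩ := hU'.2 W hW
    exact ⟨c, fun n => (hc n).trans (by gcongr; exact KOf_le_KOf fun p => hcard p n)⟩
  exact ⟨hle.ne_top hU'.KOf_ne_top, hU'.KOf_ne_top, hle, hge⟩
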